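/- arXiv:2509.14521 — 6 statements merged into one kernel-verified Lean document; each statement's English description precedes it below -/
import Mathlib

section
/- Let d ≥ 1 and let K be a d×d real matrix with all entries strictly positive. Then for all vectors x, y ∈ ℝ^d with strictly positive entries, d_H(K x, K y) ≤ tanh(Δ(K)/4) · d_H(x, y), where Δ(K) is the projective diameter of K. -/
/-- The Hilbert projective metric on strictly positive vectors:
`d_H(x, y) = log (max_j x_j / y_j) - log (min_j x_j / y_j)`. -/
noncomputable def hilbertDist {d : ℕ} (x y : Fin d → ℝ) : ℝ :=
  Real.log (⨆ j, x j / y j) - Real.log (⨅ j, x j / y j)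

/-- The projective diameter of a strictly positive matrix:
`Δ(M) = max_{j,j'} ( max_ℓ log(M_{ℓj}/M_{ℓj'}) - min_ℓ log(M_{ℓj}/M_{ℓj'}) )`. -/
noncomputable def projDiam {d : ℕ} (M : Matrix (Fin d) (Fin d) ℝ) : ℝ :=
  ⨆ j, ⨆ j', ((⨆ l, Real.log (M l j / M l j')) - ⨅ l, Real.log (M l j / M l j'))

lemma bh_scalar (P Q c : ℝ) (hP0 : 0 ≤ P) (hP1 : P ≤ 1) (hQ0 : 0 ≤ Q) (hQ1 : Q ≤ 1)
    (hc : 1 ≤ c) (h : P * (1 - Q) ≤ c ^ 2 * (Q * (1 - P))) : (P - Q) * (c + 1) ≤ c - 1 := by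
  have hA : 0 ≤ P * (1 - Q) := mul_nonneg hP0 (by linarith)
  have hB : 0 ≤ Q * (1 - P) := mul_nonneg hQ0 (by linarith)
  obtain ⟨u, hu, hu2⟩ : ∃ u : ℝ, 0 ≤ u ∧ u ^ 2 = P * (1 - Q) :=
    ⟨_, Real.sqrt_nonneg _, Real.sq_sqrt hA⟩
  obtain ⟨v, hv, hv2⟩ : ∃ u : ℝ, 0 ≤ u ∧ u ^ 2 = Q * (1 - P) :=
    ⟨_, Real.sqrt_nonneg _, Real.sq_sqrt hB⟩
  have huv : u ≤ c * v := by
    apply le_of_sq_le_sq _ (by positivity)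
    rw [mul_pow, hu2, hv2]; exact h
  have h1 : u ≤ (P + (1 - Q)) / 2 := by
    apply le_of_sq_le_sq _ (by linarith)
    rw [hu2]; nlinarith [sq_nonneg (P - (1 - Q))]
  have h2 : v ≤ (Q + (1 - P)) / 2 := by
    apply le_of_sq_le_sq _ (by linarith)
    rw [hv2]; nlinarith [sq_nonneg (Q - (1 - P))]
  have h3 : u + v ≤ 1 := by linarith
  have h4 : P - Q = (u - v) * (u + v) := by nlinarith
  have h5 : (c + 1) * (u - v) ≤ (c - 1) * (u + v) := by linarith
  have h6 : (u + v) * (u + v) ≤ 1 := by nlinarith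
  rw [h4]
  nlinarith [mul_le_mul_of_nonneg_right h5 (add_nonneg hu hv),
    mul_le_mul_of_nonneg_left h6 (sub_nonneg.2 hc)]

lemma bh_tanh (D : ℝ) : Real.tanh (D / 4) = (Real.exp (D / 2) - 1) / (Real.exp (D / 2) + 1) := by
  have h : Real.exp (D / 2) = Real.exp (D / 4) * Real.exp (D / 4) := by
    rw [← Real.exp_add]; ring_nf
  rw [Real.tanh_eq_sinh_div_cosh, Real.sinh_eq, Real.cosh_eq, h, Real.exp_neg]
  have := Real.exp_pos (D / 4)
  field_simp

lemma bh_tv {d : ℕ} (p q s : Fin d → ℝ) (D m M : ℝ) (hD : 0 ≤ D)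
    (hp : ∀ j, 0 < p j) (hq : ∀ j, 0 < q j) (sp : ∑ j, p j = 1) (sq : ∑ j, q j = 1)
    (h : ∀ j k, p j * q k ≤ Real.exp D * (q j * p k))
    (hm : ∀ j, m ≤ s j) (hM : ∀ j, s j ≤ M) (hmM : m ≤ M) :
    ∑ j, p j * s j - ∑ j, q j * s j ≤ Real.tanh (D / 4) * (M - m) := by
  classical
  set S := Finset.univ.filter (fun j => q j ≤ p j) with hS
  have e1 : ∑ j ∈ S, p j + ∑ j ∈ Sᶜ, p j = 1 := by rw [Finset.sum_add_sum_compl, sp]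
  have e2 : ∑ j ∈ S, q j + ∑ j ∈ Sᶜ, q j = 1 := by rw [Finset.sum_add_sum_compl, sq]
  have n1 : 0 ≤ ∑ j ∈ S, p j := Finset.sum_nonneg fun j _ => (hp j).le
  have n2 : 0 ≤ ∑ j ∈ Sᶜ, p j := Finset.sum_nonneg fun j _ => (hp j).le
  have n3 : 0 ≤ ∑ j ∈ S, q j := Finset.sum_nonneg fun j _ => (hq j).le
  have n4 : 0 ≤ ∑ j ∈ Sᶜ, q j := Finset.sum_nonneg fun j _ => (hq j).le
  have key : (∑ j ∈ S, p j) * (∑ j ∈ Sᶜ, q j) ≤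
      Real.exp D * ((∑ j ∈ S, q j) * (∑ j ∈ Sᶜ, p j)) := by
    rw [Finset.sum_mul_sum, Finset.sum_mul_sum, Finset.mul_sum]
    refine Finset.sum_le_sum fun j _ => ?_
    rw [Finset.mul_sum]
    exact Finset.sum_le_sum fun k _ => h j k
  have hc : 1 ≤ Real.exp (D / 2) := Real.one_le_exp (by linarith)
  have hsc := bh_scalar (∑ j ∈ S, p j) (∑ j ∈ S, q j) (Real.exp (D / 2)) n1 (by linarith) n3
    (by linarith) hc (by
      rw [← Real.exp_nat_mul]
      have a1 : 1 - ∑ j ∈ S, q j = ∑ j ∈ Sᶜ, q j := by linarith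
      have a2 : 1 - ∑ j ∈ S, p j = ∑ j ∈ Sᶜ, p j := by linarith
      have a3 : ((2 : ℕ) : ℝ) * (D / 2) = D := by push_cast; ring
      rw [a1, a2, a3]; exact key)
  have htv : ∑ j ∈ S, p j - ∑ j ∈ S, q j ≤ Real.tanh (D / 4) := by
    rw [bh_tanh, le_div_iff₀ (by linarith)]; exact hsc
  have e3 : ∑ j, p j * s j - ∑ j, q j * s j = ∑ j, (p j - q j) * (s j - m) := by
    have : ∀ j, (p j - q j) * (s j - m) = (p j * s j - q j * s j) - (p j * m - q j * m) :=
      fun j => by ring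
    simp_rw [this]
    rw [Finset.sum_sub_distrib, Finset.sum_sub_distrib, Finset.sum_sub_distrib,
      ← Finset.sum_mul, ← Finset.sum_mul, sp, sq]
    ring
  have e4 : ∑ j, (p j - q j) * (s j - m) ≤ ∑ j ∈ S, (p j - q j) * (M - m) := by
    rw [hS, Finset.sum_filter]
    refine Finset.sum_le_sum fun j _ => ?_
    split_ifs with hj
    · exact mul_le_mul_of_nonneg_left (by linarith [hM j]) (by linarith)
    · exact mul_nonpos_of_nonpos_of_nonneg (by linarith) (by linarith [hm j])
  rw [← Finset.sum_mul, Finset.sum_sub_distrib] at e4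
  rw [e3]
  exact e4.trans (mul_le_mul_of_nonneg_right htv (by linarith))

lemma bh_deriv {d : ℕ} [Nonempty (Fin d)] (p s : Fin d → ℝ) (hp : ∀ j, 0 < p j) (t : ℝ) :
    HasDerivAt (fun t => Real.log (∑ j, p j * Real.exp (t * s j)))
      (∑ j, (p j * Real.exp (t * s j) / ∑ k, p k * Real.exp (t * s k)) * s j) t := by
  have hpos : 0 < ∑ k, p k * Real.exp (t * s k) :=
    Finset.sum_pos (fun j _ => mul_pos (hp j) (Real.exp_pos _)) Finset.univ_nonempty
  have h1 : HasDerivAt (fun t => ∑ j, p j * Real.exp (t * s j))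
      (∑ j, p j * (Real.exp (t * s j) * (1 * s j))) t := by
    apply HasDerivAt.fun_sum
    intro j _
    exact (((hasDerivAt_id t).mul_const (s j)).exp).const_mul (p j)
  convert h1.log hpos.ne' using 1
  rw [Finset.sum_div]
  refine Finset.sum_congr rfl fun j _ => ?_
  ring

lemma bh_main {d : ℕ} [Nonempty (Fin d)] (p q s : Fin d → ℝ) (D m M : ℝ) (hD : 0 ≤ D)
    (hp : ∀ j, 0 < p j) (hq : ∀ j, 0 < q j)
    (h : ∀ j k, p j * q k ≤ Real.exp D * (q j * p k))
    (hm : ∀ j, m ≤ s j) (hM : ∀ j, s j ≤ M) (hmM : m ≤ M) :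
    (Real.log (∑ j, p j * Real.exp (s j)) - Real.log (∑ j, q j * Real.exp (s j))) -
      (Real.log (∑ j, p j) - Real.log (∑ j, q j)) ≤ Real.tanh (D / 4) * (M - m) := by
  have hder := fun t => (bh_deriv p s hp t).sub (bh_deriv q s hq t)
  obtain ⟨t, -, ht⟩ := exists_hasDerivAt_eq_slope _ _ (zero_lt_one' ℝ)
    (fun t _ => (hder t).continuousAt.continuousWithinAt) (fun t _ => hder t)
  simp only [Pi.sub_apply, one_mul, zero_mul, Real.exp_zero, mul_one, sub_zero, div_one] at ht
  rw [← ht]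
  have pp : 0 < ∑ k, p k * Real.exp (t * s k) :=
    Finset.sum_pos (fun j _ => mul_pos (hp j) (Real.exp_pos _)) Finset.univ_nonempty
  have qp : 0 < ∑ k, q k * Real.exp (t * s k) :=
    Finset.sum_pos (fun j _ => mul_pos (hq j) (Real.exp_pos _)) Finset.univ_nonempty
  apply bh_tv _ _ _ D m M hD _ _ _ _ _ hm hM hmM
  · exact fun j => div_pos (mul_pos (hp j) (Real.exp_pos _)) pp
  · exact fun j => div_pos (mul_pos (hq j) (Real.exp_pos _)) qp
  · rw [← Finset.sum_div, div_self pp.ne']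
  · rw [← Finset.sum_div, div_self qp.ne']
  · intro j k
    generalize (∑ k, p k * Real.exp (t * s k)) = A at *
    generalize (∑ k, q k * Real.exp (t * s k)) = B at *
    have := mul_le_mul_of_nonneg_right (h j k)
      (by positivity : 0 ≤ Real.exp (t * s j) * Real.exp (t * s k) / (A * B))
    calc _ = _ := ?_
      _ ≤ _ := this
      _ = _ := ?_
    · field_simp
    · field_simp

lemma bh_diam {d : ℕ} (K : Matrix (Fin d) (Fin d) ℝ) (hK : ∀ l j, 0 < K l j)
    (l l' j k : Fin d) : K l j * K l' k ≤ Real.exp (projDiam K) * (K l' j * K l k) := by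
  have h1 : Real.log (K l j / K l k) - Real.log (K l' j / K l' k) ≤ projDiam K := by
    unfold projDiam
    refine le_trans ?_ (le_ciSup (Set.finite_range _).bddAbove j)
    refine le_trans ?_ (le_ciSup (Set.finite_range _).bddAbove k)
    exact sub_le_sub (le_ciSup (f := fun l => Real.log (K l j / K l k)) (Set.finite_range _).bddAbove l)
      (ciInf_le (f := fun l => Real.log (K l j / K l k)) (Set.finite_range _).bddBelow l')
  have a := hK l j
  have b := hK l k
  have c := hK l' j
  have e := hK l' k
  rw [← Real.log_div (by positivity) (by positivity), Real.log_le_iff_le_exp (by positivity)] at h1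
  have := mul_le_mul_of_nonneg_right h1 (by positivity : 0 ≤ K l' j * K l k)
  calc _ = _ := ?_
    _ ≤ _ := this
  field_simp

/-- Birkhoff's contraction theorem: a strictly positive matrix contracts the
Hilbert projective metric with factor `tanh(Δ(K)/4)`. -/
theorem birkhoff_hilbert_contraction {d : ℕ} (hd : 1 ≤ d)
    (K : Matrix (Fin d) (Fin d) ℝ) (hK : ∀ l j, 0 < K l j) :
    ∀ x y : Fin d → ℝ, (∀ j, 0 < x j) → (∀ j, 0 < y j) →
      hilbertDist (K.mulVec x) (K.mulVec y) ≤
        Real.tanh (projDiam K / 4) * hilbertDist x y := by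
  intro x y hx hy
  haveI : Nonempty (Fin d) := ⟨⟨0, hd⟩⟩
  have hpos : ∀ z : Fin d → ℝ, (∀ j, 0 < z j) → ∀ l, 0 < K.mulVec z l := fun z hz l =>
    Finset.sum_pos (fun j _ => mul_pos (hK l j) (hz j)) Finset.univ_nonempty
  have hD : 0 ≤ projDiam K := by
    obtain ⟨i⟩ := ‹Nonempty (Fin d)›
    have := bh_diam K hK i i i i
    have h2 : 0 < K i i * K i i := mul_pos (hK i i) (hK i i)
    have h3 : 1 ≤ Real.exp (projDiam K) := by
      by_contra hcon
      nlinarith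
    exact Real.one_le_exp_iff.1 h3
  obtain ⟨l, hl⟩ := exists_eq_ciSup_of_finite (f := fun j => K.mulVec x j / K.mulVec y j)
  obtain ⟨l', hl'⟩ := exists_eq_ciInf_of_finite (f := fun j => K.mulVec x j / K.mulVec y j)
  obtain ⟨i, hi⟩ := exists_eq_ciInf_of_finite (f := fun j => x j / y j)
  have hr : ∀ j, 0 < x j / y j := fun j => div_pos (hx j) (hy j)
  have hs1 : ∀ j, Real.log (⨅ j, x j / y j) ≤ Real.log (x j / y j) := fun j =>
    Real.log_le_log (hi ▸ hr i) (ciInf_le (f := fun j => x j / y j) (Set.finite_range _).bddBelow j)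
  have hs2 : ∀ j, Real.log (x j / y j) ≤ Real.log (⨆ j, x j / y j) := fun j =>
    Real.log_le_log (hr j) (le_ciSup (f := fun j => x j / y j) (Set.finite_range _).bddAbove j)
  have main := bh_main (fun j => K l j * y j) (fun j => K l' j * y j) (fun j => Real.log (x j / y j))
    (projDiam K) _ _ hD (fun j => mul_pos (hK l j) (hy j)) (fun j => mul_pos (hK l' j) (hy j))
    (fun j k => by
      have := mul_le_mul_of_nonneg_right (bh_diam K hK l l' j k) (mul_pos (hy j) (hy k)).le
      linarith) hs1 hs2 ((hs1 i).trans (hs2 i))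
  have ex : ∀ l, ∑ j, K l j * y j * Real.exp (Real.log (x j / y j)) = K.mulVec x l := by
    intro l
    refine Finset.sum_congr rfl fun j _ => ?_
    rw [Real.exp_log (hr j)]
    have := (hy j).ne'
    field_simp
  have ey : ∀ l, ∑ j, K l j * y j = K.mulVec y l := fun l => rfl
  simp only [ex, ey] at main
  unfold hilbertDist
  rw [← hl, ← hl', Real.log_div (hpos x hx l).ne' (hpos y hy l).ne',
    Real.log_div (hpos x hx l').ne' (hpos y hy l').ne']
  linarith
end

section
/- Let d ≥ 1, N ≥ 1, and let x_1, …, x_N and y_1, …, y_N be vectors in ℝ^d with strictly positive entries. Define the coordinatewise geometric mean G(x_1, …, x_N) by G_j = (∏_{i=1}^N (x_i)_j)^{1/N}. Then d_H(G(x_1, …, x_N), G(y_1, …, y_N)) ≤ (1/N) ∑_{i=1}^N d_H(x_i, y_i); in particular the geometric mean is nonexpansive with respect to the maximum of the Hilbert distances. -/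
/-- The coordinatewise geometric mean `G(x_1, …, x_N)_j = (∏_i (x_i)_j)^{1/N}`. -/
noncomputable def geomMean {d N : ℕ} (x : Fin N → Fin d → ℝ) : Fin d → ℝ :=
  fun j => (∏ i, x i j) ^ ((1 : ℝ) / N)

theorem hilbertDist_attained {d : ℕ} [Nonempty (Fin d)] (x y : Fin d → ℝ) :
    ∃ j k, hilbertDist x y = Real.log (x j / y j) - Real.log (x k / y k) := by
  obtain ⟨j, hj⟩ := exists_eq_ciSup_of_finite (f := fun j => x j / y j)
  obtain ⟨k, hk⟩ := exists_eq_ciInf_of_finite (f := fun j => x j / y j)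
  refine ⟨j, k, ?_⟩
  unfold hilbertDist
  rw [← hj, ← hk]

theorem le_hilbertDist {d : ℕ} [Nonempty (Fin d)] (x y : Fin d → ℝ)
    (hx : ∀ j, 0 < x j) (hy : ∀ j, 0 < y j) (j k : Fin d) :
    Real.log (x j / y j) - Real.log (x k / y k) ≤ hilbertDist x y := by
  unfold hilbertDist
  have h1 : x j / y j ≤ ⨆ j, x j / y j :=
    le_ciSup (f := fun j => x j / y j) (Set.finite_range _).bddAbove j
  have h2 : (⨅ j, x j / y j) ≤ x k / y k :=
    ciInf_le (f := fun j => x j / y j) (Set.finite_range _).bddBelow k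
  have h3 : 0 < ⨅ j, x j / y j := by
    obtain ⟨k, hk⟩ := exists_eq_ciInf_of_finite (f := fun j => x j / y j)
    rw [← hk]
    exact div_pos (hx k) (hy k)
  have := Real.log_le_log (div_pos (hx j) (hy j)) h1
  have := Real.log_le_log h3 h2
  linarith

theorem log_geomMean_div {d N : ℕ} (x y : Fin N → Fin d → ℝ)
    (hx : ∀ i j, 0 < x i j) (hy : ∀ i j, 0 < y i j) (j : Fin d) :
    Real.log (geomMean x j / geomMean y j) = (1 / N) * ∑ i, Real.log (x i j / y i j) := by
  have px : 0 < ∏ i, x i j := Finset.prod_pos fun i _ => hx i j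
  have py : 0 < ∏ i, y i j := Finset.prod_pos fun i _ => hy i j
  unfold geomMean
  rw [← Real.div_rpow px.le py.le, Real.log_rpow (div_pos px py), ← Finset.prod_div_distrib,
    Real.log_prod (fun i _ => (div_pos (hx i j) (hy i j)).ne')]

/-- The coordinatewise geometric mean satisfies
`d_H(G(x), G(y)) ≤ (1/N) ∑_i d_H(x_i, y_i)`; in particular it is nonexpansive
with respect to the maximum of the Hilbert distances. -/
theorem geomMean_hilbert_nonexpansive {d N : ℕ} (hd : 1 ≤ d) (hN : 1 ≤ N)
    (x y : Fin N → Fin d → ℝ)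
    (hx : ∀ i j, 0 < x i j) (hy : ∀ i j, 0 < y i j) :
    hilbertDist (geomMean x) (geomMean y) ≤
      (1 / N) * ∑ i, hilbertDist (x i) (y i) ∧
    hilbertDist (geomMean x) (geomMean y) ≤
      ⨆ i, hilbertDist (x i) (y i) := by
  have : Nonempty (Fin d) := ⟨⟨0, hd⟩⟩
  have hN' : (0 : ℝ) < N := by exact_mod_cast hN
  have h1 : hilbertDist (geomMean x) (geomMean y) ≤
      (1 / N) * ∑ i, hilbertDist (x i) (y i) := by
    obtain ⟨j, k, h⟩ := hilbertDist_attained (geomMean x) (geomMean y)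
    rw [h, log_geomMean_div x y hx hy, log_geomMean_div x y hx hy, ← mul_sub,
      ← Finset.sum_sub_distrib]
    gcongr with i
    exact le_hilbertDist (x i) (y i) (hx i) (hy i) j k
  refine ⟨h1, h1.trans ?_⟩
  have h2 : ∑ i, hilbertDist (x i) (y i) ≤ ∑ _i : Fin N, ⨆ i, hilbertDist (x i) (y i) :=
    Finset.sum_le_sum fun i _ =>
      le_ciSup (f := fun i => hilbertDist (x i) (y i)) (Set.finite_range _).bddAbove i
  rw [Finset.sum_const, Finset.card_univ, Fintype.card_fin, nsmul_eq_mul] at h2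
  rw [one_div, inv_mul_le_iff₀ hN']
  exact h2
end

section
/- Let d ≥ 1, N ≥ 1, let K be a d×d real matrix with all entries strictly positive, and let μ_1, …, μ_N ∈ ℝ^d have strictly positive entries. Define the full Sinkhorn barycenter cycle F on vectors v ∈ ℝ^d with strictly positive entries by: u_i(v) = μ_i ⊘ (K v) (coordinatewise division) for i = 1, …, N, and F(v)_j = (∏_{i=1}^N (Kᵀ u_i(v))_j)^{1/N}. Then for all strictly positive v, v' ∈ ℝ^d, d_H(F(v), F(v')) ≤ tanh(Δ(K)/4) · tanh(Δ(Kᵀ)/4) · d_H(v, v'); in particular one full barycenter cycle is a Hilbert-metric contraction with factor independent of N. -/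
/-- The per-agent Sinkhorn scaling update `u_i(v) = μ_i ⊘ (K v)`. -/
noncomputable def sinkhornU {d : ℕ} (K : Matrix (Fin d) (Fin d) ℝ)
    (μ : Fin d → ℝ) (v : Fin d → ℝ) : Fin d → ℝ :=
  fun l => μ l / K.mulVec v l

/-- One full Sinkhorn barycenter cycle:
`F(v)_j = (∏_{i=1}^N (Kᵀ u_i(v))_j)^{1/N}` with `u_i(v) = μ_i ⊘ (K v)`. -/
noncomputable def barycenterCycle {d N : ℕ} (K : Matrix (Fin d) (Fin d) ℝ)
    (μ : Fin N → Fin d → ℝ) (v : Fin d → ℝ) : Fin d → ℝ :=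
  fun j => (∏ i, K.transpose.mulVec (sinkhornU K (μ i) v) j) ^ ((1 : ℝ) / N)

lemma bc_tv {d : ℕ} (p q τ : Fin d → ℝ) (R D : ℝ) (hR : 1 ≤ R)
    (hp : ∀ j, 0 < p j) (hq : ∀ j, 0 < q j) (hp1 : ∑ j, p j = 1) (hq1 : ∑ j, q j = 1)
    (hcr : ∀ j k, p j * q k ≤ R ^ 2 * (p k * q j))
    (hD : ∀ j k, τ j - τ k ≤ D) :
    ∑ j, p j * τ j - ∑ j, q j * τ j ≤ (R - 1) / (R + 1) * D := by
  have hne : Nonempty (Fin d) := by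
    by_contra h
    rw [not_nonempty_iff] at h
    simp at hp1
  obtain ⟨a, ha⟩ := Finite.exists_min (fun j => p j / q j)
  obtain ⟨b, hb⟩ := Finite.exists_min τ
  set α := p a / q a with hα
  have hα0 : 0 < α := div_pos (hp a) (hq a)
  have hD0 : 0 ≤ D := by simpa using hD a a
  have h1 : ∀ j, α * q j ≤ p j := fun j => by
    have := ha j
    rwa [le_div_iff₀ (hq j)] at this
  have h2 : ∀ j, p j ≤ R ^ 2 * α * q j := fun j => by
    have := hcr j a
    rw [hα, mul_div_assoc', div_mul_eq_mul_div, le_div_iff₀ (hq a)]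
    linarith
  have hα1 : α ≤ 1 := by
    have := Finset.sum_le_sum (fun j (_ : j ∈ Finset.univ) => h1 j)
    rwa [← Finset.mul_sum, hp1, hq1, mul_one] at this
  have hβ1 : 1 ≤ R ^ 2 * α := by
    have := Finset.sum_le_sum (fun j (_ : j ∈ Finset.univ) => h2 j)
    rwa [← Finset.mul_sum, hp1, hq1, mul_one] at this
  set c := ∑ j, max (p j - q j) 0 with hc
  have key : ∑ j, p j * τ j - ∑ j, q j * τ j ≤ c * D := by
    have e : ∑ j, p j * τ j - ∑ j, q j * τ j = ∑ j, (p j - q j) * (τ j - τ b) := by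
      have : ∀ j, (p j - q j) * (τ j - τ b) = p j * τ j - q j * τ j - (p j * τ b - q j * τ b) :=
        fun j => by ring
      simp only [this, Finset.sum_sub_distrib, ← Finset.sum_mul, hp1, hq1]
      ring
    rw [e, hc, Finset.sum_mul]
    refine Finset.sum_le_sum fun j _ => ?_
    have g1 : 0 ≤ τ j - τ b := sub_nonneg.2 (hb j)
    calc _ ≤ max (p j - q j) 0 * (τ j - τ b) := by gcongr; exact le_max_left _ _
      _ ≤ _ := by gcongr; exact hD j b
  refine key.trans (mul_le_mul_of_nonneg_right ?_ hD0)
  rcases hR.eq_or_lt with h | h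
  · subst h
    have : α = 1 := by linarith
    have : c ≤ 0 := by
      refine Finset.sum_nonpos fun j _ => max_le ?_ le_rfl
      have := h2 j
      simp [‹α = 1›] at this
      linarith
    simpa using this
  · have h3 : c * ((R ^ 2 - 1) * α) ≤ (R ^ 2 * α - 1) * (1 - α) := by
      have : (R ^ 2 * α - 1) * (1 - α) = ∑ j, (R ^ 2 * α - 1) * (p j - α * q j) := by
        rw [← Finset.mul_sum, Finset.sum_sub_distrib, ← Finset.mul_sum, hp1, hq1, mul_one]
      rw [this, hc, Finset.sum_mul]
      refine Finset.sum_le_sum fun j _ => ?_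
      have g1 := h1 j
      have g2 := h2 j
      rcases le_total (p j - q j) 0 with h' | h'
      · rw [max_eq_right h']
        rw [zero_mul]
        exact mul_nonneg (by linarith) (by linarith)
      · rw [max_eq_left h']
        nlinarith [mul_nonneg (sub_nonneg.2 hα1) (sub_nonneg.2 g2)]
    rw [le_div_iff₀ (by linarith)]
    have h4 : c * (R + 1) * ((R - 1) * α) ≤ (R - 1) * ((R - 1) * α) := by
      nlinarith [sq_nonneg (R * α - 1)]
    exact le_of_mul_le_mul_right h4 (mul_pos (by linarith) hα0)

lemma bc_tv' {d : ℕ} [NeZero d] (p q τ : Fin d → ℝ) (R D : ℝ) (hR : 1 ≤ R)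
    (hp : ∀ j, 0 < p j) (hq : ∀ j, 0 < q j)
    (hcr : ∀ j k, p j * q k ≤ R ^ 2 * (p k * q j))
    (hD : ∀ j k, τ j - τ k ≤ D) :
    (∑ j, p j * τ j) / (∑ j, p j) - (∑ j, q j * τ j) / (∑ j, q j) ≤ (R - 1) / (R + 1) * D := by
  have hP : 0 < ∑ j, p j := Finset.sum_pos (fun j _ => hp j) Finset.univ_nonempty
  have hQ : 0 < ∑ j, q j := Finset.sum_pos (fun j _ => hq j) Finset.univ_nonempty
  have := bc_tv (fun j => p j / ∑ j, p j) (fun j => q j / ∑ j, q j) τ R D hR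
    (fun j => div_pos (hp j) hP) (fun j => div_pos (hq j) hQ)
    (by rw [← Finset.sum_div, div_self hP.ne']) (by rw [← Finset.sum_div, div_self hQ.ne'])
    (fun j k => by
      rw [div_mul_div_comm, div_mul_div_comm, mul_div_assoc']
      exact div_le_div_of_nonneg_right (hcr j k) (mul_pos hP hQ).le) hD
  simpa only [div_mul_eq_mul_div, ← Finset.sum_div] using this

lemma bc_log {d : ℕ} [NeZero d] (p q τ : Fin d → ℝ) (R D : ℝ) (hR : 1 ≤ R)
    (hp : ∀ j, 0 < p j) (hq : ∀ j, 0 < q j)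
    (hcr : ∀ j k, p j * q k ≤ R ^ 2 * (p k * q j))
    (hD : ∀ j k, τ j - τ k ≤ D) :
    (Real.log (∑ j, p j * Real.exp (τ j)) - Real.log (∑ j, q j * Real.exp (τ j)))
      - (Real.log (∑ j, p j) - Real.log (∑ j, q j)) ≤ (R - 1) / (R + 1) * D := by
  have pos : ∀ (w : Fin d → ℝ), (∀ j, 0 < w j) → ∀ s : ℝ, 0 < ∑ j, w j * Real.exp (s * τ j) :=
    fun w hw s => Finset.sum_pos (fun j _ => mul_pos (hw j) (Real.exp_pos _)) Finset.univ_nonempty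
  have der : ∀ (w : Fin d → ℝ), (∀ j, 0 < w j) → ∀ s : ℝ,
      HasDerivAt (fun s => Real.log (∑ j, w j * Real.exp (s * τ j)))
        ((∑ j, w j * Real.exp (s * τ j) * τ j) / (∑ j, w j * Real.exp (s * τ j))) s := by
    intro w hw s
    refine HasDerivAt.log ?_ (pos w hw s).ne'
    refine HasDerivAt.fun_sum fun j _ => ?_
    have := (((hasDerivAt_id s).mul_const (τ j)).exp).const_mul (w j)
    simpa [mul_assoc] using this
  have der2 := fun s => (der p hp s).sub (der q hq s)
  obtain ⟨s, -, hs⟩ := exists_hasDerivAt_eq_slope _ _ (zero_lt_one)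
    (fun s _ => (der2 s).continuousAt.continuousWithinAt) (fun s _ => der2 s)
  have := bc_tv' (fun j => p j * Real.exp (s * τ j)) (fun j => q j * Real.exp (s * τ j)) τ R D hR
    (fun j => mul_pos (hp j) (Real.exp_pos _)) (fun j => mul_pos (hq j) (Real.exp_pos _))
    (fun j k => by
      have := mul_le_mul_of_nonneg_right (hcr j k)
        (mul_pos (Real.exp_pos (s * τ j)) (Real.exp_pos (s * τ k))).le
      linarith) hD
  rw [hs] at this
  simpa using this

lemma bc_projDiam {d : ℕ} (M : Matrix (Fin d) (Fin d) ℝ) (j j' l m : Fin d) :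
    Real.log (M l j / M l j') - Real.log (M m j / M m j') ≤ projDiam M := by
  have fb : ∀ f : Fin d → ℝ, BddAbove (Set.range f) := fun f => (Set.finite_range f).bddAbove
  have fb' : ∀ f : Fin d → ℝ, BddBelow (Set.range f) := fun f => (Set.finite_range f).bddBelow
  unfold projDiam
  refine le_trans ?_ (le_ciSup (fb _) j)
  refine le_trans ?_ (le_ciSup (fb _) j')
  exact sub_le_sub (le_ciSup (fb fun l => Real.log (M l j / M l j')) l)
    (ciInf_le (fb' fun l => Real.log (M l j / M l j')) m)

lemma bc_hilbert {d : ℕ} [NeZero d] (x y : Fin d → ℝ) (hx : ∀ j, 0 < x j) (hy : ∀ j, 0 < y j) :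
    (∀ j k, Real.log (x j / y j) - Real.log (x k / y k) ≤ hilbertDist x y) ∧
    ∃ j k, hilbertDist x y = Real.log (x j / y j) - Real.log (x k / y k) := by
  obtain ⟨a, ha⟩ := exists_eq_ciSup_of_finite (f := fun j => x j / y j)
  obtain ⟨b, hb⟩ := exists_eq_ciInf_of_finite (f := fun j => x j / y j)
  have e : hilbertDist x y = Real.log (x a / y a) - Real.log (x b / y b) := by
    unfold hilbertDist; rw [← ha, ← hb]
  refine ⟨fun j k => ?_, a, b, e⟩
  have h1 : x j / y j ≤ x a / y a := by
    rw [ha]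
    exact le_ciSup (f := fun j => x j / y j) (Set.finite_range _).bddAbove j
  have h2 : x b / y b ≤ x k / y k := by
    rw [hb]
    exact ciInf_le (f := fun j => x j / y j) (Set.finite_range _).bddBelow k
  rw [e]
  exact sub_le_sub (Real.log_le_log (div_pos (hx j) (hy j)) h1)
    (Real.log_le_log (div_pos (hx b) (hy b)) h2)

lemma bc_tanh (t : ℝ) : (Real.exp (t / 2) - 1) / (Real.exp (t / 2) + 1) = Real.tanh (t / 4) := by
  rw [Real.tanh_eq_sinh_div_cosh, Real.sinh_eq, Real.cosh_eq]
  have e : Real.exp (t / 2) = Real.exp (t / 4) * Real.exp (t / 4) := by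
    rw [← Real.exp_add]; ring_nf
  rw [e, Real.exp_neg]
  have := Real.exp_pos (t / 4)
  field_simp

lemma bc_mulVec_pos {d : ℕ} [NeZero d] (M : Matrix (Fin d) (Fin d) ℝ) (hM : ∀ l j, 0 < M l j)
    (x : Fin d → ℝ) (hx : ∀ j, 0 < x j) (l : Fin d) : 0 < M.mulVec x l :=
  Finset.sum_pos (fun j _ => mul_pos (hM l j) (hx j)) Finset.univ_nonempty

lemma bc_projDiam_nonneg {d : ℕ} [NeZero d] (M : Matrix (Fin d) (Fin d) ℝ) : 0 ≤ projDiam M := by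
  simpa using bc_projDiam M 0 0 0 0

lemma bc_birkhoff {d : ℕ} [NeZero d] (M : Matrix (Fin d) (Fin d) ℝ) (hM : ∀ l j, 0 < M l j)
    (x y : Fin d → ℝ) (hx : ∀ j, 0 < x j) (hy : ∀ j, 0 < y j) (D : ℝ)
    (hD : ∀ j k, Real.log (x j / y j) - Real.log (x k / y k) ≤ D) (l m : Fin d) :
    Real.log (M.mulVec x l / M.mulVec y l) - Real.log (M.mulVec x m / M.mulVec y m)
      ≤ Real.tanh (projDiam M / 4) * D := by
  have := bc_log (fun j => M l j * y j) (fun j => M m j * y j) (fun j => Real.log (x j / y j))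
    (Real.exp (projDiam M / 2)) D
    (Real.one_le_exp (by linarith [bc_projDiam_nonneg M]))
    (fun j => mul_pos (hM l j) (hy j)) (fun j => mul_pos (hM m j) (hy j))
    (fun j k => by
      have h := bc_projDiam M j k l m
      have e : Real.exp (projDiam M / 2) ^ 2 = Real.exp (projDiam M) := by
        rw [sq, ← Real.exp_add]; ring_nf
      rw [e]
      have h1 : M l j / M l k / (M m j / M m k) ≤ Real.exp (projDiam M) := by
        rw [← Real.log_le_iff_le_exp
          (div_pos (div_pos (hM _ _) (hM _ _)) (div_pos (hM _ _) (hM _ _))),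
          Real.log_div (div_pos (hM _ _) (hM _ _)).ne' (div_pos (hM _ _) (hM _ _)).ne']
        exact h
      rw [div_div_div_eq, div_le_iff₀ (mul_pos (hM _ _) (hM _ _))] at h1
      have := mul_le_mul_of_nonneg_right h1 (mul_pos (hy j) (hy k)).le
      linarith) hD
  rw [bc_tanh] at this
  have e : ∀ l, ∑ j, M l j * y j * Real.exp (Real.log (x j / y j)) = M.mulVec x l := by
    intro l
    refine Finset.sum_congr rfl fun j _ => ?_
    rw [Real.exp_log (div_pos (hx j) (hy j)), mul_assoc, mul_div_cancel₀ _ (hy j).ne']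
  have e' : ∀ l, ∑ j, M l j * y j = M.mulVec y l := fun l => rfl
  simp only [e, e'] at this
  have P := bc_mulVec_pos M hM
  rw [Real.log_div (P x hx l).ne' (P y hy l).ne', Real.log_div (P x hx m).ne' (P y hy m).ne']
  linarith

/-- One full Sinkhorn barycenter cycle is a Hilbert-metric contraction with
factor `tanh(Δ(K)/4) · tanh(Δ(Kᵀ)/4)`, independent of the number of agents `N`. -/
theorem barycenterCycle_hilbert_contraction {d N : ℕ} (hd : 1 ≤ d) (hN : 1 ≤ N)
    (K : Matrix (Fin d) (Fin d) ℝ) (hK : ∀ l j, 0 < K l j)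
    (μ : Fin N → Fin d → ℝ) (hμ : ∀ i l, 0 < μ i l) :
    ∀ v v' : Fin d → ℝ, (∀ j, 0 < v j) → (∀ j, 0 < v' j) →
      hilbertDist (barycenterCycle K μ v) (barycenterCycle K μ v') ≤
        Real.tanh (projDiam K / 4) * Real.tanh (projDiam K.transpose / 4) *
          hilbertDist v v' := by
  intro v v' hv hv'
  haveI : NeZero d := ⟨by omega⟩
  have hKt : ∀ l j, 0 < K.transpose l j := fun l j => hK j l
  have P := bc_mulVec_pos K hK
  have Pt := bc_mulVec_pos K.transpose hKt
  have hu : ∀ w : Fin d → ℝ, (∀ j, 0 < w j) → ∀ i l, 0 < sinkhornU K (μ i) w l :=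
    fun w hw i l => div_pos (hμ i l) (P w hw l)
  have hF : ∀ w : Fin d → ℝ, (∀ j, 0 < w j) → ∀ j, 0 < barycenterCycle K μ w j :=
    fun w hw j => Real.rpow_pos_of_pos (Finset.prod_pos fun i _ => Pt _ (hu w hw i) j) _
  have hlF : ∀ w : Fin d → ℝ, (∀ j, 0 < w j) → ∀ j, Real.log (barycenterCycle K μ w j) =
      (1 / N : ℝ) * ∑ i, Real.log (K.transpose.mulVec (sinkhornU K (μ i) w) j) := by
    intro w hw j
    unfold barycenterCycle
    rw [Real.log_rpow (Finset.prod_pos fun i _ => Pt _ (hu w hw i) j),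
      Real.log_prod (fun i _ => (Pt _ (hu w hw i) j).ne')]
  set C := Real.tanh (projDiam K / 4) * Real.tanh (projDiam K.transpose / 4) *
          hilbertDist v v' with hC
  have step : ∀ i j k, Real.log (K.transpose.mulVec (sinkhornU K (μ i) v) j /
        K.transpose.mulVec (sinkhornU K (μ i) v') j) -
      Real.log (K.transpose.mulVec (sinkhornU K (μ i) v) k /
        K.transpose.mulVec (sinkhornU K (μ i) v') k) ≤ C := by
    intro i j k
    have := bc_birkhoff K.transpose hKt (sinkhornU K (μ i) v) (sinkhornU K (μ i) v')
      (hu v hv i) (hu v' hv' i) (Real.tanh (projDiam K / 4) * hilbertDist v v') (by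
        intro j k
        have h := bc_birkhoff K hK v v' hv hv' _ (bc_hilbert v v' hv hv').1 k j
        have e : ∀ l, sinkhornU K (μ i) v l / sinkhornU K (μ i) v' l =
            (K.mulVec v l / K.mulVec v' l)⁻¹ := by
          intro l
          have := (hμ i l).ne'
          have := (P v hv l).ne'
          have := (P v' hv' l).ne'
          unfold sinkhornU
          field_simp
        rw [e, e, Real.log_inv, Real.log_inv]
        linarith) j k
    rw [hC]
    linarith
  obtain ⟨j, k, e⟩ := (bc_hilbert _ _ (hF v hv) (hF v' hv')).2
  rw [e, Real.log_div (hF v hv j).ne' (hF v' hv' j).ne',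
    Real.log_div (hF v hv k).ne' (hF v' hv' k).ne', hlF v hv, hlF v hv, hlF v' hv', hlF v' hv']
  have hs := Finset.sum_le_sum (fun i (_ : i ∈ (Finset.univ : Finset (Fin N))) => step i j k)
  have hN0 : (0 : ℝ) < N := by exact_mod_cast hN
  have hl : ∀ i j, Real.log (K.transpose.mulVec (sinkhornU K (μ i) v) j /
        K.transpose.mulVec (sinkhornU K (μ i) v') j) =
      Real.log (K.transpose.mulVec (sinkhornU K (μ i) v) j) -
        Real.log (K.transpose.mulVec (sinkhornU K (μ i) v') j) := fun i j =>
    Real.log_div (Pt _ (hu v hv i) j).ne' (Pt _ (hu v' hv' i) j).ne'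
  simp only [hl, Finset.sum_sub_distrib, Finset.sum_const, Finset.card_univ, Fintype.card_fin,
    nsmul_eq_mul] at hs
  rw [← mul_sub, ← mul_sub, ← mul_sub, one_div, inv_mul_le_iff₀ hN0]
  exact hs
end

section
/- Let d ≥ 1, let x, y ∈ ℝ^d have strictly positive entries, and suppose d_H(x, y) ≤ γ for some γ ≥ 0. Let p = x / ⟨1, x⟩ and q = y / ⟨1, y⟩ be the normalizations of x and y. Then ‖p − q‖₁ ≤ e^γ − 1. -/
/-- Normalization of a vector to a probability vector: `x / ⟨1, x⟩`. -/
noncomputable def normalizeVec {d : ℕ} (x : Fin d → ℝ) : Fin d → ℝ :=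
  fun j => x j / ∑ k, x k

/-- Hilbert-to-`ℓ1` bridge: if `d_H(x, y) ≤ γ` then the normalizations of `x`
and `y` satisfy `‖p - q‖₁ ≤ e^γ - 1`. -/
theorem hilbert_to_l1_bridge {d : ℕ} (hd : 1 ≤ d)
    (x y : Fin d → ℝ) (hx : ∀ j, 0 < x j) (hy : ∀ j, 0 < y j)
    (γ : ℝ) (hγ : 0 ≤ γ) (hdH : hilbertDist x y ≤ γ) :
    ∑ j, |normalizeVec x j - normalizeVec y j| ≤ Real.exp γ - 1 := by
  have key : ∀ j k, x j * y k ≤ Real.exp γ * (x k * y j) := by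
    intro j k
    haveI : Nonempty (Fin d) := ⟨j⟩
    have h1 : x j / y j ≤ ⨆ j, x j / y j :=
      le_ciSup (f := fun j => x j / y j) (Set.finite_range _).bddAbove j
    have h2 : (⨅ j, x j / y j) ≤ x k / y k :=
      ciInf_le (f := fun j => x j / y j) (Set.finite_range _).bddBelow k
    have hm : 0 < ⨅ j, x j / y j := by
      obtain ⟨i, hi⟩ := exists_eq_ciInf_of_finite (f := fun j => x j / y j)
      rw [← hi]
      exact div_pos (hx i) (hy i)
    have hM : 0 < ⨆ j, x j / y j := lt_of_lt_of_le (div_pos (hx j) (hy j)) h1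
    unfold hilbertDist at hdH
    rw [← Real.log_div hM.ne' hm.ne', Real.log_le_iff_le_exp (div_pos hM hm),
      div_le_iff₀ hm] at hdH
    have h3 : x j / y j ≤ Real.exp γ * (x k / y k) :=
      h1.trans (hdH.trans (mul_le_mul_of_nonneg_left h2 (Real.exp_pos γ).le))
    rw [← mul_div_assoc, div_le_div_iff₀ (hy j) (hy k)] at h3
    linarith
  haveI : Nonempty (Fin d) := ⟨⟨0, hd⟩⟩
  have hX : 0 < ∑ k, x k := Finset.sum_pos (fun i _ => hx i) Finset.univ_nonempty
  have hY : 0 < ∑ k, y k := Finset.sum_pos (fun i _ => hy i) Finset.univ_nonempty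
  have hE : 1 ≤ Real.exp γ := Real.one_le_exp hγ
  have hp : ∀ j, normalizeVec x j ≤ Real.exp γ * normalizeVec y j := by
    intro j
    unfold normalizeVec
    rw [← mul_div_assoc, div_le_div_iff₀ hX hY, Finset.mul_sum, Finset.mul_sum]
    exact Finset.sum_le_sum fun k _ => by linarith [key j k]
  have hq : ∀ j, normalizeVec y j ≤ Real.exp γ * normalizeVec x j := by
    intro j
    unfold normalizeVec
    rw [← mul_div_assoc, div_le_div_iff₀ hY hX, Finset.mul_sum, Finset.mul_sum]
    exact Finset.sum_le_sum fun k _ => by linarith [key k j]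
  have hsum : ∑ j, normalizeVec y j = 1 := by
    unfold normalizeVec
    rw [← Finset.sum_div, div_self hY.ne']
  calc ∑ j, |normalizeVec x j - normalizeVec y j|
      ≤ ∑ j, (Real.exp γ - 1) * normalizeVec y j := by
        refine Finset.sum_le_sum fun j _ => ?_
        have h0 : 0 < normalizeVec y j := div_pos (hy j) hY
        have a := hp j
        have b := hq j
        rw [abs_le]
        constructor
        · rcases le_total (normalizeVec x j) (normalizeVec y j) with h | h
          · nlinarith [mul_le_mul_of_nonneg_left h (sub_nonneg.2 hE)]
          · nlinarith [mul_nonneg (sub_nonneg.2 hE) h0.le]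
        · linarith
    _ = Real.exp γ - 1 := by rw [← Finset.mul_sum, hsum, mul_one]
end

section
/- Let d ≥ 1, let 0 < v_min ≤ 2 and v_max ≥ v_min, and let x, y ∈ ℝ^d satisfy v_min ≤ x_j ≤ v_max and v_min ≤ y_j ≤ v_max for all j. If d_H(x, y) ≤ γ for some γ ≥ 0, then the normalizations p = x / ⟨1, x⟩ and q = y / ⟨1, y⟩ satisfy ‖p − q‖₁ ≤ (2 / v_min) · (e^γ − 1). -/
/-- Range-aware Hilbert-to-`ℓ1` bridge: for vectors with entries in
`[v_min, v_max]`, `0 < v_min ≤ 2`, if `d_H(x, y) ≤ γ` then the normalizations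
satisfy `‖p - q‖₁ ≤ (2 / v_min) (e^γ - 1)`. -/
theorem hilbert_to_l1_bridge_range {d : ℕ} (hd : 1 ≤ d)
    (vmin vmax : ℝ) (hvmin : 0 < vmin) (hvmin2 : vmin ≤ 2) (hvmax : vmin ≤ vmax)
    (x y : Fin d → ℝ)
    (hx : ∀ j, vmin ≤ x j ∧ x j ≤ vmax) (hy : ∀ j, vmin ≤ y j ∧ y j ≤ vmax)
    (γ : ℝ) (hγ : 0 ≤ γ) (hdH : hilbertDist x y ≤ γ) :
    ∑ j, |normalizeVec x j - normalizeVec y j| ≤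
      (2 / vmin) * (Real.exp γ - 1) := by
  have hxp : ∀ j, 0 < x j := fun j => lt_of_lt_of_le hvmin (hx j).1
  have hyp : ∀ j, 0 < y j := fun j => lt_of_lt_of_le hvmin (hy j).1
  haveI : Nonempty (Fin d) := ⟨⟨0, hd⟩⟩
  have hE : 1 ≤ Real.exp γ := Real.one_le_exp hγ
  have hbdA : BddAbove (Set.range fun j => x j / y j) := (Set.finite_range _).bddAbove
  have hbdB : BddBelow (Set.range fun j => x j / y j) := (Set.finite_range _).bddBelow
  have hinf : 0 < ⨅ j, x j / y j := by
    obtain ⟨j, hj⟩ := exists_eq_ciInf_of_finite (f := fun j => x j / y j)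
    rw [← hj]
    exact div_pos (hxp j) (hyp j)
  have hsup : 0 < ⨆ j, x j / y j := by
    obtain ⟨j, hj⟩ := exists_eq_ciSup_of_finite (f := fun j => x j / y j)
    rw [← hj]
    exact div_pos (hxp j) (hyp j)
  have hSI : (⨆ j, x j / y j) ≤ Real.exp γ * ⨅ j, x j / y j := by
    unfold hilbertDist at hdH
    rw [← Real.log_div hsup.ne' hinf.ne', Real.log_le_iff_le_exp (div_pos hsup hinf),
      div_le_iff₀ hinf] at hdH
    exact hdH
  have key : ∀ i k, x i * y k ≤ Real.exp γ * x k * y i := by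
    intro i k
    have h1 : x i / y i ≤ Real.exp γ * (x k / y k) :=
      (le_ciSup hbdA i).trans (hSI.trans
        (mul_le_mul_of_nonneg_left (ciInf_le hbdB k) (Real.exp_pos γ).le))
    rw [← mul_div_assoc, div_le_div_iff₀ (hyp i) (hyp k)] at h1
    exact h1
  have hX : 0 < ∑ k, x k := Finset.sum_pos (fun j _ => hxp j) Finset.univ_nonempty
  have hY : 0 < ∑ k, y k := Finset.sum_pos (fun j _ => hyp j) Finset.univ_nonempty
  have hpq : ∀ i, normalizeVec x i ≤ Real.exp γ * normalizeVec y i := by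
    intro i
    unfold normalizeVec
    rw [← mul_div_assoc, div_le_div_iff₀ hX hY, Finset.mul_sum, Finset.mul_sum]
    exact Finset.sum_le_sum fun k _ => by linarith [key i k]
  have hqp : ∀ i, normalizeVec y i ≤ Real.exp γ * normalizeVec x i := by
    intro i
    unfold normalizeVec
    rw [← mul_div_assoc, div_le_div_iff₀ hY hX, Finset.mul_sum, Finset.mul_sum]
    exact Finset.sum_le_sum fun k _ => by linarith [key k i]
  have hsum : ∑ j, normalizeVec y j = 1 := by
    unfold normalizeVec
    rw [← Finset.sum_div, div_self hY.ne']
  calc ∑ j, |normalizeVec x j - normalizeVec y j|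
      ≤ ∑ j, (Real.exp γ - 1) * normalizeVec y j := by
        refine Finset.sum_le_sum fun j _ => ?_
        have h1 := hpq j
        have h2 := hqp j
        rcases le_total (normalizeVec x j) (normalizeVec y j) with h | h
        · rw [abs_of_nonpos (by linarith)]
          nlinarith [mul_le_mul_of_nonneg_left h (sub_nonneg.2 hE)]
        · rw [abs_of_nonneg (by linarith)]
          linarith
    _ = Real.exp γ - 1 := by rw [← Finset.mul_sum, hsum, mul_one]
    _ ≤ (2 / vmin) * (Real.exp γ - 1) := by
        have : 1 ≤ 2 / vmin := (one_le_div hvmin).2 hvmin2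
        exact le_mul_of_one_le_left (sub_nonneg.2 hE) this
end

section
/- Let d ≥ 1, let s_min ≤ s_max be real numbers, and let z, z' ∈ ℝ^d satisfy s_min ≤ z_j ≤ s_max and s_min ≤ z'_j ≤ s_max for all j. Let p = exp(z)/⟨1, exp(z)⟩ and p' = exp(z')/⟨1, exp(z')⟩ be the normalized coordinatewise exponentials (softmax vectors). Then ‖p − p'‖₁ ≤ (2 e^{s_max} / e^{s_min}) · ‖z − z'‖₁. -/
/-- The softmax vector of `z`: the normalized coordinatewise exponential. -/
noncomputable def softmaxVec {d : ℕ} (z : Fin d → ℝ) : Fin d → ℝ :=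
  normalizeVec fun j => Real.exp (z j)

/-- One-step perturbation bound through `exp` and normalization: on the box
`s_min ≤ z_j ≤ s_max`, the softmax map is `(2 e^{s_max} / e^{s_min})`-Lipschitz
from `ℓ1` to `ℓ1`. -/
theorem softmax_lipschitz_l1 {d : ℕ} (hd : 1 ≤ d) (smin smax : ℝ)
    (hrange : smin ≤ smax) (z z' : Fin d → ℝ)
    (hz : ∀ j, smin ≤ z j ∧ z j ≤ smax) (hz' : ∀ j, smin ≤ z' j ∧ z' j ≤ smax) :
    ∑ j, |softmaxVec z j - softmaxVec z' j| ≤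
      (2 * Real.exp smax / Real.exp smin) * ∑ j, |z j - z' j| := by
  have : Nonempty (Fin d) := ⟨⟨0, hd⟩⟩
  have key : ∀ x y : ℝ, x ≤ smax → Real.exp x - Real.exp y ≤ Real.exp smax * |x - y| := by
    intro x y hx
    have h1 := Real.add_one_le_exp (y - x)
    have h2 : Real.exp y = Real.exp x * Real.exp (y - x) := by
      rw [← Real.exp_add]; congr 1; ring
    have h3 := Real.exp_pos x
    have h4 : Real.exp x ≤ Real.exp smax := Real.exp_le_exp.mpr hx
    calc Real.exp x - Real.exp y ≤ Real.exp x * (x - y) := by rw [h2]; nlinarith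
      _ ≤ Real.exp x * |x - y| := mul_le_mul_of_nonneg_left (le_abs_self _) h3.le
      _ ≤ Real.exp smax * |x - y| := mul_le_mul_of_nonneg_right h4 (abs_nonneg _)
  have hab : ∀ j, |Real.exp (z j) - Real.exp (z' j)| ≤ Real.exp smax * |z j - z' j| := by
    intro j
    rw [abs_le']
    refine ⟨key _ _ (hz j).2, ?_⟩
    have := key (z' j) (z j) (hz' j).2
    rw [abs_sub_comm (z j)]
    linarith
  set A := ∑ k, Real.exp (z k) with hA
  set B := ∑ k, Real.exp (z' k) with hB
  set D := ∑ j, |Real.exp (z j) - Real.exp (z' j)| with hD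
  have hD0 : 0 ≤ D := Finset.sum_nonneg fun j _ => abs_nonneg _
  have hDle : D ≤ Real.exp smax * ∑ j, |z j - z' j| := by
    rw [Finset.mul_sum]; exact Finset.sum_le_sum fun j _ => hab j
  have hAm : Real.exp smin ≤ A :=
    (Real.exp_le_exp.mpr (hz ⟨0, hd⟩).1).trans
      (Finset.single_le_sum (f := fun k => Real.exp (z k))
        (fun k _ => (Real.exp_pos _).le) (Finset.mem_univ _))
  have hm := Real.exp_pos smin
  have hA0 : 0 < A := hm.trans_le hAm
  have hB0 : 0 < B := Finset.sum_pos (fun k _ => Real.exp_pos _) Finset.univ_nonempty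
  have hBA : |B - A| ≤ D := by
    rw [abs_sub_comm, hA, hB, ← Finset.sum_sub_distrib]
    exact Finset.abs_sum_le_sum_abs _ _
  have hterm : ∀ j, |softmaxVec z j - softmaxVec z' j| ≤
      |Real.exp (z j) - Real.exp (z' j)| / A + Real.exp (z' j) * (|B - A| / (A * B)) := by
    intro j
    have h : softmaxVec z j - softmaxVec z' j =
        (Real.exp (z j) - Real.exp (z' j)) / A + Real.exp (z' j) * ((B - A) / (A * B)) := by
      change Real.exp (z j) / A - Real.exp (z' j) / B = _
      field_simp
      ring
    rw [h]
    refine (abs_add_le _ _).trans (le_of_eq ?_)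
    rw [abs_div, abs_mul, abs_div, abs_of_pos hA0, abs_of_pos (mul_pos hA0 hB0),
      abs_of_pos (Real.exp_pos _)]
  calc ∑ j, |softmaxVec z j - softmaxVec z' j|
      ≤ ∑ j, (|Real.exp (z j) - Real.exp (z' j)| / A
          + Real.exp (z' j) * (|B - A| / (A * B))) := Finset.sum_le_sum fun j _ => hterm j
    _ = D / A + B * (|B - A| / (A * B)) := by
        rw [Finset.sum_add_distrib, ← Finset.sum_div, ← Finset.sum_mul]
    _ = (D + |B - A|) / A := by field_simp
    _ ≤ (2 * D) / A := by gcongr; linarith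
    _ ≤ (2 * D) / Real.exp smin := by gcongr
    _ ≤ (2 * (Real.exp smax * ∑ j, |z j - z' j|)) / Real.exp smin := by gcongr
    _ = _ := by ring
end
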